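/- Let a local IFS on a compact metric space X have local attractor A := ⋃{B ⊆ X : F(B) = B}, and assume A ≠ ∅. Then the code space Σ := {b : ℕ → Fin n | V_b(k) ≠ ∅ for all k ≥ 1} is a nonempty closed (hence compact) subset of the product space ℕ → Fin n, where Fin n carries the discrete topology and ℕ → Fin n the product topology. -/

import Mathlib

/-- The cylinder sets of a local IFS: `cylinder f Xs k b` is the set
`V_b(k+1) = f_{b 0}(⋯ f_{b k}(X_{b k}) ⋯ ∩ X_{b 0})` of the left-infinite word
encoded by `b : ℕ → Fin n` (so `b (k-1)` is the symbol `b_{-k}`). -/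
def cylinder {X : Type*} {n : ℕ} (f : Fin n → X → X) (Xs : Fin n → Set X) :
    ℕ → (ℕ → Fin n) → Set X
  | 0, b => f (b 0) '' Xs (b 0)
  | k + 1, b => f (b 0) '' (cylinder f Xs k (fun j => b (j + 1)) ∩ Xs (b 0))

/-- The code space of a local IFS: the set of left-infinite words all of whose
cylinder sets are nonempty. -/
def codeSpace {X : Type*} {n : ℕ} (f : Fin n → X → X) (Xs : Fin n → Set X) :
    Set (ℕ → Fin n) :=
  {b | ∀ k : ℕ, (cylinder f Xs k b).Nonempty}

/-!
Closedness: `V_b(k)` depends only on the first `k` letters of `b`, so each condition `V_b(k) ≠ ∅`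
defines a clopen set of words, and the code space is the intersection of these sets.

Nonemptiness: if `B = F(B)`, then every point of `B` is the image under some `f_j` of a point of
`B ∩ X_j`. Choosing such preimages repeatedly gives a backward orbit in `B`; its starting point lies
in every cylinder set of the word of chosen indices.
-/

section LocalHutchinson

variable {X ι : Type*}

/-- The local Hutchinson–Barnsley operator `F(B) = ⋃ j, f j (B ∩ X_j)` of a local IFS. -/
def localHutchinson (f : ι → X → X) (Xs : ι → Set X) (B : Set X) : Set X :=
  ⋃ j, f j '' (B ∩ Xs j)

/-- The local attractor of a local IFS: the union of all sets invariant under its local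
Hutchinson–Barnsley operator. -/
def localAttractor (f : ι → X → X) (Xs : ι → Set X) : Set X :=
  ⋃₀ {B | localHutchinson f Xs B = B}

/-- A sequence `x` is a backward orbit along the word `b` if each `x i` is the image of `x (i + 1)`
under the map with index `b i`, applied within its domain. It witnesses that all cylinder sets of
`b` are nonempty. -/
def IsBackwardOrbit (f : ι → X → X) (Xs : ι → Set X) (b : ℕ → ι) (x : ℕ → X) : Prop :=
  ∀ i, x (i + 1) ∈ Xs (b i) ∧ f (b i) (x (i + 1)) = x i

variable {f : ι → X → X} {Xs : ι → Set X}

theorem mem_localHutchinson {B : Set X} {y : X} :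
    y ∈ localHutchinson f Xs B ↔ ∃ j, ∃ z ∈ B, z ∈ Xs j ∧ f j z = y := by
  simp only [localHutchinson, Set.mem_iUnion, Set.mem_image, Set.mem_inter_iff, and_assoc]

theorem IsBackwardOrbit.tail {b : ℕ → ι} {x : ℕ → X} (h : IsBackwardOrbit f Xs b x) :
    IsBackwardOrbit f Xs (fun i => b (i + 1)) (fun i => x (i + 1)) :=
  fun i => h (i + 1)

theorem exists_isBackwardOrbit_of_subset_localHutchinson {B : Set X}
    (hB : B ⊆ localHutchinson f Xs B) {y : X} (hy : y ∈ B) :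
    ∃ (b : ℕ → ι) (x : ℕ → X), x 0 = y ∧ IsBackwardOrbit f Xs b x := by
  have exists_preimage (z : B) : ∃ (j : ι) (w : B), (w : X) ∈ Xs j ∧ f j w = z := by
    obtain ⟨j, w, hwB, hw⟩ := mem_localHutchinson.1 (hB z.2)
    exact ⟨j, ⟨w, hwB⟩, hw⟩
  choose letter pre hpre using exists_preimage
  refine ⟨fun i => letter (pre^[i] ⟨y, hy⟩), fun i => pre^[i] ⟨y, hy⟩, rfl, fun i => ?_⟩
  simpa only [Function.iterate_succ_apply'] using hpre (pre^[i] ⟨y, hy⟩)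

theorem exists_isBackwardOrbit_of_mem_localAttractor {y : X} (hy : y ∈ localAttractor f Xs) :
    ∃ (b : ℕ → ι) (x : ℕ → X), x 0 = y ∧ IsBackwardOrbit f Xs b x := by
  obtain ⟨B, hB, hyB⟩ := hy
  exact exists_isBackwardOrbit_of_subset_localHutchinson (Eq.ge hB) hyB

end LocalHutchinson

section CodeSpace

variable {X : Type*} {n : ℕ} {f : Fin n → X → X} {Xs : Fin n → Set X}

theorem IsBackwardOrbit.mem_cylinder {b : ℕ → Fin n} {x : ℕ → X} (h : IsBackwardOrbit f Xs b x)
    (k : ℕ) : x 0 ∈ cylinder f Xs k b := by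
  induction k generalizing b x with
  | zero => exact ⟨x 1, h 0⟩
  | succ k ih => exact ⟨x 1, ⟨ih h.tail, (h 0).1⟩, (h 0).2⟩

theorem IsBackwardOrbit.mem_codeSpace {b : ℕ → Fin n} {x : ℕ → X}
    (h : IsBackwardOrbit f Xs b x) : b ∈ codeSpace f Xs :=
  fun k => ⟨x 0, h.mem_cylinder k⟩

theorem codeSpace_nonempty_of_localAttractor_nonempty (hA : (localAttractor f Xs).Nonempty) :
    (codeSpace f Xs).Nonempty := by
  obtain ⟨y, hy⟩ := hA
  obtain ⟨b, x, -, hx⟩ := exists_isBackwardOrbit_of_mem_localAttractor hy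
  exact ⟨b, hx.mem_codeSpace⟩

variable (f Xs)

theorem isLocallyConstant_cylinder (k : ℕ) : IsLocallyConstant (cylinder f Xs k) := by
  have head : IsLocallyConstant fun b : ℕ → Fin n => b 0 :=
    (IsLocallyConstant.iff_continuous _).2 (continuous_apply 0)
  induction k with
  | zero => exact head.comp fun j => f j '' Xs j
  | succ k ih =>
    have shift : Continuous fun (b : ℕ → Fin n) (j : ℕ) => b (j + 1) := by fun_prop
    exact (head.prodMk (ih.comp_continuous shift)).comp fun p => f p.1 '' (p.2 ∩ Xs p.1)

theorem isClopen_cylinder_nonempty (k : ℕ) :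
    IsClopen {b : ℕ → Fin n | (cylinder f Xs k b).Nonempty} := by
  have nonempty_const : IsLocallyConstant fun b => (cylinder f Xs k b).Nonempty :=
    (isLocallyConstant_cylinder f Xs k).comp Set.Nonempty
  simpa only [eq_iff_iff, iff_true] using nonempty_const.isClopen_fiber True

theorem isClosed_codeSpace : IsClosed (codeSpace f Xs) := by
  have codeSpace_eq : codeSpace f Xs = ⋂ k, {b | (cylinder f Xs k b).Nonempty} :=
    Set.ofPred_forall _
  rw [codeSpace_eq]
  exact isClosed_iInter fun k => (isClopen_cylinder_nonempty f Xs k).isClosed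

theorem codeSpace_nonempty_isClosed_isCompact_general (hA : (localAttractor f Xs).Nonempty) :
    (codeSpace f Xs).Nonempty ∧ IsClosed (codeSpace f Xs) ∧ IsCompact (codeSpace f Xs) :=
  ⟨codeSpace_nonempty_of_localAttractor_nonempty hA, isClosed_codeSpace f Xs,
    (isClosed_codeSpace f Xs).isCompact⟩

end CodeSpace

/-- If the local attractor `A = ⋃ {B : F B = B}` of a local IFS is
nonempty, then the code space `Σ = {b | V_b(k) ≠ ∅ for all k ≥ 1}` is a nonempty closed
(hence compact) subset of the product space `ℕ → Fin n`. -/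
theorem codeSpace_nonempty_isClosed_isCompact {X : Type*} [MetricSpace X] [CompactSpace X]
    {n : ℕ} (hn : 0 < n)
    (Xs : Fin n → Set X) (hXs : ∀ j, IsClosed (Xs j))
    (f : Fin n → X → X) (hf : ∀ j, ContinuousOn (f j) (Xs j))
    (F : Set X → Set X) (hF : ∀ B, F B = ⋃ j, f j '' (B ∩ Xs j))
    (A : Set X) (hA : A = ⋃₀ {B : Set X | F B = B}) (hAne : A.Nonempty) :
    (codeSpace f Xs).Nonempty ∧ IsClosed (codeSpace f Xs) ∧ IsCompact (codeSpace f Xs) := by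
  obtain rfl : F = localHutchinson f Xs := funext hF
  exact codeSpace_nonempty_isClosed_isCompact_general f Xs (hA.subst hAne)
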